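/- There exists a constant C > 0 such that for every m ≥ 1, N = 2^m, every integer k with 1 ≤ k ≤ m, and every function u that is four times continuously differentiable on a neighbourhood of [0,1]² and vanishes on the boundary of [0,1]², the multiscale interpolants satisfy |||I^{(k)}_{N,N}u − I^{(k−1)}_{N,N}u||| ≤ C (k·4^{k+1}·N^{−4} + 4^{k+1}·N^{−3}) ‖∂⁴u/∂x²∂y²‖_{0,Ω}. -/

import Mathlib

open MeasureTheory Finset

noncomputable section

/-- The hat function `ψ_i^N` on the uniform mesh of `[0,1]` with `N` intervals. -/
def hat (N i : ℕ) (x : ℝ) : ℝ :=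
  if ((i : ℝ) - 1) / N ≤ x ∧ x ≤ (i : ℝ) / N then N * (x - ((i : ℝ) - 1) / N)
  else if (i : ℝ) / N ≤ x ∧ x ≤ ((i : ℝ) + 1) / N then N * (((i : ℝ) + 1) / N - x)
  else 0

/-- The nodal piecewise bilinear interpolant `I_{Nx,Ny} u`. -/
def interp (Nx Ny : ℕ) (u : ℝ × ℝ → ℝ) : ℝ × ℝ → ℝ := fun p =>
  ∑ i ∈ range (Nx + 1), ∑ j ∈ range (Ny + 1),
    u ((i : ℝ) / Nx, (j : ℝ) / Ny) * hat Nx i p.1 * hat Ny j p.2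

/-- The one-directional interpolant `I_{Nx,0} u` (interpolation in the `x`-direction only). -/
def interpX (Nx : ℕ) (u : ℝ × ℝ → ℝ) : ℝ × ℝ → ℝ := fun p =>
  ∑ i ∈ range (Nx + 1), u ((i : ℝ) / Nx, p.2) * hat Nx i p.1

/-- The one-directional interpolant `I_{0,Ny} u` (interpolation in the `y`-direction only). -/
def interpY (Ny : ℕ) (u : ℝ × ℝ → ℝ) : ℝ × ℝ → ℝ := fun p =>
  ∑ j ∈ range (Ny + 1), u (p.1, (j : ℝ) / Ny) * hat Ny j p.2

/-- The two-scale interpolant `Î_{N,N} u = I_{N,σ}u + I_{σ,N}u − I_{σ,σ}u`. -/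
def twoScale (N σ : ℕ) (u : ℝ × ℝ → ℝ) : ℝ × ℝ → ℝ := fun p =>
  interp N σ u p + interp σ N u p - interp σ σ u p

/-- The multiscale interpolant
`I^{(k)}_{N,N} u = Σ_{i=0}^{k} I_{N/2^i, N/2^{k−i}}u − Σ_{i=1}^{k} I_{N/2^i, N/2^{k+1−i}}u`. -/
def msInterp (N k : ℕ) (u : ℝ × ℝ → ℝ) : ℝ × ℝ → ℝ := fun p =>
  ∑ i ∈ range (k + 1), interp (N / 2 ^ i) (N / 2 ^ (k - i)) u p
    - ∑ i ∈ Finset.Icc 1 k, interp (N / 2 ^ i) (N / 2 ^ (k + 1 - i)) u p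

/-- The closed square `[0,1]²`. -/
def unitSquare : Set (ℝ × ℝ) := Set.Icc (0 : ℝ) 1 ×ˢ Set.Icc (0 : ℝ) 1

/-- The open square `Ω = (0,1)²`. -/
def Omega2 : Set (ℝ × ℝ) := Set.Ioo (0 : ℝ) 1 ×ˢ Set.Ioo (0 : ℝ) 1

/-- Partial derivative in `x` (defined a.e. for Lipschitz functions; junk value `0` elsewhere). -/
def pderivX (v : ℝ × ℝ → ℝ) : ℝ × ℝ → ℝ := fun p => deriv (fun x => v (x, p.2)) p.1

/-- Partial derivative in `y` (defined a.e. for Lipschitz functions; junk value `0` elsewhere). -/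
def pderivY (v : ℝ × ℝ → ℝ) : ℝ × ℝ → ℝ := fun p => deriv (fun y => v (p.1, y)) p.2

/-- The `L²(Ω)` norm `‖v‖_{0,Ω}`. -/
def L2norm (v : ℝ × ℝ → ℝ) : ℝ := Real.sqrt (∫ p in Omega2, (v p) ^ 2)

/-- The energy norm `|||v||| = (∫_Ω |∇v|² + ∫_Ω v²)^{1/2}`, gradients taken a.e. -/
def energyNorm (v : ℝ × ℝ → ℝ) : ℝ :=
  Real.sqrt (∫ p in Omega2, ((pderivX v p) ^ 2 + (pderivY v p) ^ 2 + (v p) ^ 2))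

/-- `u` is four times continuously differentiable on a neighbourhood of `[0,1]²`. -/
def C4Near (u : ℝ × ℝ → ℝ) : Prop :=
  ∃ U : Set (ℝ × ℝ), IsOpen U ∧ unitSquare ⊆ U ∧ ContDiffOn ℝ 4 u U

/-- `u` vanishes on the boundary of `[0,1]²`. -/
def VanishOnBoundary (u : ℝ × ℝ → ℝ) : Prop :=
  ∀ p ∈ unitSquare, (p.1 = 0 ∨ p.1 = 1 ∨ p.2 = 0 ∨ p.2 = 1) → u p = 0

/-- The seminorm `|u|₂ = ‖u_xx‖_{0,Ω} + ‖u_xy‖_{0,Ω} + ‖u_yy‖_{0,Ω}`. -/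
def semi2 (u : ℝ × ℝ → ℝ) : ℝ :=
  L2norm (pderivX (pderivX u)) + L2norm (pderivX (pderivY u)) + L2norm (pderivY (pderivY u))

/-- The mixed fourth derivative `∂⁴u/∂x²∂y²`. -/
def uxxyy (u : ℝ × ℝ → ℝ) : ℝ × ℝ → ℝ := pderivX (pderivX (pderivY (pderivY u)))

/-- The bilinear form `B(v,w) = ∫_Ω ∇v·∇w + ∫_Ω v w`, gradients taken a.e. -/
def Bform (v w : ℝ × ℝ → ℝ) : ℝ :=
  ∫ p in Omega2, (pderivX v p * pderivX w p + pderivY v p * pderivY w p + v p * w p)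

/-- The reference hat function on `[-1,1]`. -/
def refHat (t : ℝ) : ℝ := max 0 (1 - |t|)

/-- The derivative of the reference hat function away from its kinks. -/
def refHatDeriv (t : ℝ) : ℝ := if -1 < t ∧ t < 0 then 1 else if 0 < t ∧ t < 1 then -1 else 0

/-- The indicator function of `(-1,1)`. -/
def refBump (t : ℝ) : ℝ := if -1 < t ∧ t < 1 then 1 else 0

lemma hat_eq_refHat {N : ℕ} (hN : 0 < N) (i : ℕ) (x : ℝ) : hat N i x = refHat (N * x - i) := by
  have hN' : (0 : ℝ) < N := by exact_mod_cast hN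
  unfold hat refHat
  simp only [div_le_iff₀ hN', le_div_iff₀ hN']
  have e1 : (N : ℝ) * (x - ((i : ℝ) - 1) / N) = N * x - i + 1 := by field_simp; ring
  have e2 : (N : ℝ) * (((i : ℝ) + 1) / N - x) = i + 1 - N * x := by field_simp
  rw [e1, e2]
  split_ifs with h1 h2
  · rw [abs_of_nonpos (by linarith [h1.2]), max_eq_right (by linarith [h1.1])]; ring
  · rw [abs_of_nonneg (by linarith [h2.1]), max_eq_right (by linarith [h2.2])]; ring
  · rw [max_eq_left]
    by_contra hlt
    push Not at hlt h1 h2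
    have h := abs_lt.1 (show |(N : ℝ) * x - i| < 1 by linarith)
    have h3 := h1 (by linarith [h.1])
    have h4 := h2 (by linarith)
    linarith [h.2]

lemma refHat_eq_zero {t : ℝ} (h : 1 ≤ |t|) : refHat t = 0 := max_eq_left (by linarith)

lemma refHat_refine (t : ℝ) :
    refHat t = refHat (2 * t) + refHat (2 * t - 1) / 2 + refHat (2 * t + 1) / 2 := by
  unfold refHat
  grind

lemma abs_refHat_le (t : ℝ) : |refHat t| ≤ refBump t := by
  unfold refHat refBump
  grind

lemma abs_refHatDeriv_le (t : ℝ) : |refHatDeriv t| ≤ refBump t := by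
  unfold refHatDeriv refBump
  grind

lemma refHat_nonneg (t : ℝ) : 0 ≤ refHat t := le_max_left _ _

lemma continuous_refHat : Continuous refHat := by
  unfold refHat; fun_prop

lemma measurable_refHatDeriv : Measurable refHatDeriv :=
  Measurable.ite measurableSet_Ioo measurable_const
    (Measurable.ite measurableSet_Ioo measurable_const measurable_const)

lemma measurable_refBump : Measurable refBump :=
  Measurable.ite measurableSet_Ioo measurable_const measurable_const

lemma hasDerivAt_refHat {t : ℝ} (h0 : t ≠ 0) (h1 : t ≠ 1) (h2 : t ≠ -1) :
    HasDerivAt refHat (refHatDeriv t) t := by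
  unfold refHatDeriv
  split_ifs with ha hb
  · have : HasDerivAt (fun s : ℝ => 1 + s) 1 t := (hasDerivAt_id t).const_add 1
    refine this.congr_of_eventuallyEq ?_
    filter_upwards [Ioo_mem_nhds ha.1 ha.2] with s hs
    rw [refHat, abs_of_neg hs.2, max_eq_right (by linarith [hs.1])]; ring
  · have : HasDerivAt (fun s : ℝ => 1 - s) (-1) t := (hasDerivAt_id t).const_sub 1
    refine this.congr_of_eventuallyEq ?_
    filter_upwards [Ioo_mem_nhds hb.1 hb.2] with s hs
    rw [refHat, abs_of_pos hs.1, max_eq_right (by linarith [hs.2])]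
  · have h : 1 < |t| := by grind
    refine (hasDerivAt_const t (0 : ℝ)).congr_of_eventuallyEq ?_
    filter_upwards [continuous_abs.continuousAt.eventually (lt_mem_nhds h)] with s hs
    exact refHat_eq_zero hs.le

/-- The nodal piecewise linear interpolant in one variable. -/
def interpLine (N : ℕ) (g : ℝ → ℝ) (x : ℝ) : ℝ :=
  ∑ i ∈ range (N + 1), g ((i : ℝ) / N) * hat N i x

lemma interpLine_sub (N : ℕ) (f g : ℝ → ℝ) (x : ℝ) :
    interpLine N (fun s => f s - g s) x = interpLine N f x - interpLine N g x := by
  simp only [interpLine, ← Finset.sum_sub_distrib, sub_mul]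

lemma interp_eq_interpLine (Nx Ny : ℕ) (u : ℝ × ℝ → ℝ) (p : ℝ × ℝ) :
    interp Nx Ny u p = interpLine Nx (fun s => interpLine Ny (fun t => u (s, t)) p.2) p.1 := by
  simp only [interp, interpLine, Finset.sum_mul]
  exact Finset.sum_congr rfl fun i _ => Finset.sum_congr rfl fun j _ => by ring

/-- The hierarchical surplus of `g` at the midpoint of the `q`-th of `M` intervals. -/
def surplus (M q : ℕ) (g : ℝ → ℝ) : ℝ :=
  g ((2 * q + 1) / (2 * M)) - (g (q / M) + g ((q + 1) / M)) / 2

lemma sum_range_two_mul_add_one (f : ℕ → ℝ) (M : ℕ) :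
    ∑ i ∈ range (2 * M + 1), f i
      = ∑ q ∈ range (M + 1), f (2 * q) + ∑ q ∈ range M, f (2 * q + 1) := by
  induction M with
  | zero => simp
  | succ M ih =>
    rw [show 2 * (M + 1) + 1 = (2 * M + 1) + 1 + 1 by ring, Finset.sum_range_succ,
      Finset.sum_range_succ, ih, Finset.sum_range_succ _ (M + 1),
      Finset.sum_range_succ (fun q => f (2 * q + 1)) M]
    rw [show 2 * M + 1 + 1 = 2 * (M + 1) by ring]; ring

lemma interpLine_two_mul_sub {M : ℕ} (hM : 0 < M) (g : ℝ → ℝ) {x : ℝ} (hx0 : 0 ≤ x)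
    (hx1 : x ≤ 1) :
    interpLine (2 * M) g x - interpLine M g x
      = ∑ q ∈ range M, surplus M q g * refHat (2 * M * x - (2 * q + 1)) := by
  have hM' : (0 : ℝ) < M := by exact_mod_cast hM
  have hfine : interpLine (2 * M) g x
      = ∑ q ∈ range (M + 1), g (q / M) * refHat (2 * M * x - 2 * q)
        + ∑ q ∈ range M, g ((2 * q + 1) / (2 * M)) * refHat (2 * M * x - (2 * q + 1)) := by
    rw [interpLine, sum_range_two_mul_add_one]
    simp only [hat_eq_refHat (show 0 < 2 * M by omega)]
    push_cast
    congr 1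
    refine Finset.sum_congr rfl fun q _ => ?_
    rw [mul_div_mul_left _ _ (two_ne_zero' ℝ)]
  have hcoarse : interpLine M g x
      = ∑ q ∈ range (M + 1), g (q / M) * refHat (2 * M * x - 2 * q)
        + ∑ q ∈ range (M + 1), g (q / M) * (refHat (2 * M * x - (2 * q + 1)) / 2)
        + ∑ q ∈ range (M + 1), g (q / M) * (refHat (2 * M * x - 2 * q + 1) / 2) := by
    rw [interpLine, ← Finset.sum_add_distrib, ← Finset.sum_add_distrib]
    refine Finset.sum_congr rfl fun q _ => ?_
    rw [hat_eq_refHat hM, refHat_refine,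
      show 2 * ((M : ℝ) * x - q) = 2 * M * x - 2 * q by ring,
      show 2 * (M : ℝ) * x - 2 * q - 1 = 2 * M * x - (2 * q + 1) by ring]
    ring
  have hlast : refHat (2 * M * x - (2 * M + 1)) = 0 := by
    apply refHat_eq_zero
    rw [abs_of_nonpos (by nlinarith)]; nlinarith
  have hfirst : refHat (2 * M * x + 1) = 0 := by
    apply refHat_eq_zero
    rw [abs_of_nonneg (by positivity)]; nlinarith
  rw [hfine, hcoarse, Finset.sum_range_succ (fun q : ℕ =>
      g (q / M) * (refHat (2 * M * x - (2 * q + 1)) / 2)) M, hlast,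
    Finset.sum_range_succ' (fun q : ℕ => g (q / M) * (refHat (2 * M * x - 2 * q + 1) / 2)) M]
  simp only [Nat.cast_zero, mul_zero, sub_zero, hfirst, zero_div, add_zero]
  have hsplit : ∑ q ∈ range M, surplus M q g * refHat (2 * M * x - (2 * q + 1))
      = ∑ q ∈ range M, g ((2 * q + 1) / (2 * M)) * refHat (2 * M * x - (2 * q + 1))
        - ∑ q ∈ range M, g (q / M) * (refHat (2 * M * x - (2 * q + 1)) / 2)
        - ∑ q ∈ range M, g ((q + 1 : ℕ) / M)
            * (refHat (2 * M * x - 2 * (q + 1 : ℕ) + 1) / 2) := by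
    rw [← Finset.sum_sub_distrib, ← Finset.sum_sub_distrib]
    refine Finset.sum_congr rfl fun q _ => ?_
    rw [surplus]
    push_cast
    rw [show 2 * (M : ℝ) * x - 2 * (q + 1) + 1 = 2 * M * x - (2 * q + 1) by ring]
    ring
  rw [hsplit]; ring

/-- The hierarchical coefficient of `u` at a cell midpoint, by tensorized surpluses. -/
def surplus₂ (M L q r : ℕ) (u : ℝ × ℝ → ℝ) : ℝ :=
  surplus M q fun s => surplus L r fun t => u (s, t)

lemma surplus_sum_mul (M q L : ℕ) (c : ℝ → ℕ → ℝ) (b : ℕ → ℝ) :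
    surplus M q (fun s => ∑ r ∈ range L, c s r * b r)
      = ∑ r ∈ range L, surplus M q (fun s => c s r) * b r := by
  simp only [surplus, ← Finset.sum_add_distrib, Finset.sum_div, ← Finset.sum_sub_distrib]
  exact Finset.sum_congr rfl fun r _ => by ring

/-- A piecewise tensor-product function on the cells of the `M × L` mesh. -/
def tensorSum (M L : ℕ) (c : ℕ → ℕ → ℝ) (α β : ℝ → ℝ) (p : ℝ × ℝ) : ℝ :=
  ∑ q ∈ range M, ∑ r ∈ range L,
    c q r * α (2 * M * p.1 - (2 * q + 1)) * β (2 * L * p.2 - (2 * r + 1))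

lemma interp_mixed_difference {M L : ℕ} (hM : 0 < M) (hL : 0 < L) (u : ℝ × ℝ → ℝ) {p : ℝ × ℝ}
    (hp : p ∈ unitSquare) :
    interp (2 * M) (2 * L) u p - interp M (2 * L) u p - interp (2 * M) L u p + interp M L u p
      = tensorSum M L (fun q r => surplus₂ M L q r u) refHat refHat p := by
  obtain ⟨⟨hx0, hx1⟩, hy0, hy1⟩ := hp
  simp only [interp_eq_interpLine]
  have h := interpLine_two_mul_sub hM (fun s => interpLine (2 * L) (fun t => u (s, t)) p.2
    - interpLine L (fun t => u (s, t)) p.2) hx0 hx1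
  rw [interpLine_sub, interpLine_sub] at h
  rw [show ∀ a b c d : ℝ, a - b - c + d = a - c - (b - d) by intros; ring, h]
  simp only [interpLine_two_mul_sub hL _ hy0 hy1, surplus_sum_mul, Finset.sum_mul, tensorSum,
    surplus₂]
  exact Finset.sum_congr rfl fun q _ => Finset.sum_congr rfl fun r _ => by ring

lemma msInterp_sub_eq {m k : ℕ} (hkm : k + 1 ≤ m) (u : ℝ × ℝ → ℝ) {p : ℝ × ℝ}
    (hp : p ∈ unitSquare) :
    msInterp (2 ^ m) (k + 1) u p - msInterp (2 ^ m) k u p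
      = -∑ i ∈ range (k + 1), tensorSum (2 ^ (m - 1 - i)) (2 ^ (m - 1 - (k - i)))
          (fun q r => surplus₂ (2 ^ (m - 1 - i)) (2 ^ (m - 1 - (k - i))) q r u)
          refHat refHat p := by
  set a : ℕ → ℕ → ℝ := fun i j => interp (2 ^ m / 2 ^ i) (2 ^ m / 2 ^ j) u p with ha
  have hdiff : ∀ i ∈ range (k + 1), tensorSum (2 ^ (m - 1 - i)) (2 ^ (m - 1 - (k - i)))
      (fun q r => surplus₂ (2 ^ (m - 1 - i)) (2 ^ (m - 1 - (k - i))) q r u) refHat refHat p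
      = a i (k - i) - a (i + 1) (k - i) - a i (k + 1 - i) + a (i + 1) (k + 1 - i) := by
    intro i hi
    have hi' : i ≤ k := by simpa [Nat.lt_succ_iff] using hi
    rw [← interp_mixed_difference (by positivity) (by positivity) u hp]
    simp only [ha]
    rw [Nat.pow_div (by omega) two_pos, Nat.pow_div (by omega) two_pos,
      Nat.pow_div (by omega) two_pos, Nat.pow_div (by omega) two_pos, ← pow_succ', ← pow_succ',
      show m - 1 - i + 1 = m - i by omega, show m - 1 - (k - i) + 1 = m - (k - i) by omega,
      show m - 1 - i = m - (i + 1) by omega, show m - 1 - (k - i) = m - (k + 1 - i) by omega]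
  rw [Finset.sum_congr rfl hdiff]
  have hIcc : ∀ (n : ℕ) (f : ℕ → ℝ), ∑ i ∈ Finset.Icc 1 n, f i = ∑ i ∈ range n, f (i + 1) := by
    intro n f
    rw [Finset.range_eq_Ico, Finset.sum_Ico_add' f 0 n 1]; rfl
  have hms : ∀ n, msInterp (2 ^ m) n u p
      = ∑ i ∈ range (n + 1), a i (n - i) - ∑ i ∈ range n, a (i + 1) (n - i) := by
    intro n
    rw [msInterp, hIcc]
    simp only [Nat.add_sub_add_right, ha]
  rw [hms, hms, Finset.sum_range_succ _ (k + 1)]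
  simp only [Finset.sum_add_distrib, Finset.sum_sub_distrib]
  rw [Finset.sum_range_succ (fun i => a (i + 1) (k - i)) k]
  simp only [Nat.sub_self]
  ring

lemma hasDerivAt_pderivX {v : ℝ × ℝ → ℝ} {p : ℝ × ℝ} (h : DifferentiableAt ℝ v p) :
    HasDerivAt (fun x => v (x, p.2)) (fderiv ℝ v p (1, 0)) p.1 :=
  HasFDerivAt.comp_hasDerivAt (l := v) p.1 h.hasFDerivAt
    ((hasDerivAt_id p.1).prodMk (hasDerivAt_const p.1 p.2))

lemma hasDerivAt_pderivY {v : ℝ × ℝ → ℝ} {p : ℝ × ℝ} (h : DifferentiableAt ℝ v p) :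
    HasDerivAt (fun y => v (p.1, y)) (fderiv ℝ v p (0, 1)) p.2 :=
  HasFDerivAt.comp_hasDerivAt (l := v) p.2 h.hasFDerivAt
    ((hasDerivAt_const p.2 p.1).prodMk (hasDerivAt_id p.2))

lemma pderivX_eq {v : ℝ × ℝ → ℝ} {p : ℝ × ℝ} (h : DifferentiableAt ℝ v p) :
    pderivX v p = fderiv ℝ v p (1, 0) := (hasDerivAt_pderivX h).deriv

lemma pderivY_eq {v : ℝ × ℝ → ℝ} {p : ℝ × ℝ} (h : DifferentiableAt ℝ v p) :
    pderivY v p = fderiv ℝ v p (0, 1) := (hasDerivAt_pderivY h).deriv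

lemma contDiffOn_pderivX {U : Set (ℝ × ℝ)} (hU : IsOpen U) {v : ℝ × ℝ → ℝ} {n : ℕ}
    (h : ContDiffOn ℝ (n + 1) v U) : ContDiffOn ℝ n (pderivX v) U := by
  have h1 : ContDiffOn ℝ n (fun p => fderiv ℝ v p (1, 0)) U :=
    (h.fderiv_of_isOpen hU le_rfl).clm_apply contDiffOn_const
  refine h1.congr fun p hp => pderivX_eq ?_
  exact (h.differentiableOn (by simp)).differentiableAt (hU.mem_nhds hp)

lemma contDiffOn_pderivY {U : Set (ℝ × ℝ)} (hU : IsOpen U) {v : ℝ × ℝ → ℝ} {n : ℕ}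
    (h : ContDiffOn ℝ (n + 1) v U) : ContDiffOn ℝ n (pderivY v) U := by
  have h1 : ContDiffOn ℝ n (fun p => fderiv ℝ v p (0, 1)) U :=
    (h.fderiv_of_isOpen hU le_rfl).clm_apply contDiffOn_const
  refine h1.congr fun p hp => pderivY_eq ?_
  exact (h.differentiableOn (by simp)).differentiableAt (hU.mem_nhds hp)

lemma surplus_eq_integral {M q : ℕ} (hq : q < M) {g g' g'' : ℝ → ℝ}
    (hg : ∀ t ∈ Set.Icc (0 : ℝ) 1, HasDerivAt g (g' t) t)
    (hg' : ∀ t ∈ Set.Icc (0 : ℝ) 1, HasDerivAt g' (g'' t) t)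
    (hc : ContinuousOn g'' (Set.Icc 0 1)) :
    surplus M q g
      = -(1 / (4 * M)) * ∫ t in Set.Ioo (0 : ℝ) 1, refHat (2 * M * t - (2 * q + 1)) * g'' t := by
  have hM : (0 : ℝ) < M := by exact_mod_cast (by omega : 0 < M)
  have hq1 : (q : ℝ) + 1 ≤ M := by exact_mod_cast hq
  have hq0 : (0 : ℝ) ≤ q := q.cast_nonneg
  set a : ℝ := q / M with ha
  set b : ℝ := (2 * q + 1) / (2 * M) with hb
  set c : ℝ := (q + 1) / M with hc'
  have ha0 : 0 ≤ a := by positivity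
  have hab : a ≤ b := by rw [ha, hb, div_le_div_iff₀ hM (by positivity)]; nlinarith
  have hbc : b ≤ c := by rw [hc', hb, div_le_div_iff₀ (by positivity) hM]; nlinarith
  have hc1 : c ≤ 1 := by rw [hc', div_le_one hM]; exact hq1
  have hMa : M * a = q := by rw [ha]; field_simp
  have hMb : 2 * M * b = 2 * q + 1 := by rw [hb]; field_simp
  have hMc : M * c = q + 1 := by rw [hc']; field_simp
  have hsub : ∀ {s t : ℝ}, 0 ≤ s → s ≤ t → t ≤ 1 → Set.uIcc s t ⊆ Set.Icc 0 1 :=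
    fun h0 hst h1 => by rw [Set.uIcc_of_le hst]; exact Set.Icc_subset_Icc h0 h1
  have hint : ∀ {φ : ℝ → ℝ} {s t : ℝ}, Continuous φ → 0 ≤ s → s ≤ t → t ≤ 1 →
      IntervalIntegrable (fun x => φ x * g'' x) volume s t := fun hφ h0 hst h1 =>
    (hφ.continuousOn.mul (hc.mono (hsub h0 hst h1))).intervalIntegrable
  have hφ : Continuous fun t : ℝ => refHat (2 * M * t - (2 * q + 1)) :=
    continuous_refHat.comp (by fun_prop)
  have hleft : ∫ t in a..b, (t - a) * g'' t = (b - a) * g' b - g b + g a := by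
    rw [intervalIntegral.integral_eq_sub_of_hasDerivAt (f := fun t => (t - a) * g' t - g t)
      (fun t ht => ?_) (hint (by fun_prop) ha0 hab (by linarith))]
    · simp
    · have ht' := hsub ha0 hab (by linarith) ht
      have := (((hasDerivAt_id t).sub_const a).mul (hg' t ht')).sub (hg t ht')
      exact this.congr_deriv (by simp)
  have hright : ∫ t in b..c, (c - t) * g'' t = -(c - b) * g' b - g b + g c := by
    rw [intervalIntegral.integral_eq_sub_of_hasDerivAt (f := fun t => (c - t) * g' t + g t)
      (fun t ht => ?_) (hint (by fun_prop) (by linarith) hbc hc1)]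
    · simp; ring
    · have ht' := hsub (by linarith) hbc hc1 ht
      have := (((hasDerivAt_id t).const_sub c).mul (hg' t ht')).add (hg t ht')
      exact this.congr_deriv (by simp)
  have hzero : ∀ {s t : ℝ}, s ≤ t → (t ≤ a ∨ c ≤ s) →
      ∫ x in s..t, refHat (2 * M * x - (2 * q + 1)) * g'' x = 0 := by
    intro s t hst h
    apply intervalIntegral.integral_zero_ae
    refine Filter.Eventually.of_forall fun x hx => ?_
    rw [Set.uIoc_of_le hst] at hx
    rw [refHat_eq_zero, zero_mul]
    rcases h with h | h
    · rw [abs_of_nonpos] <;> nlinarith [hx.2]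
    · rw [abs_of_nonneg] <;> nlinarith [hx.1]
  have hl : ∫ x in a..b, refHat (2 * M * x - (2 * q + 1)) * g'' x
      = 2 * M * ((b - a) * g' b - g b + g a) := by
    rw [← hleft, ← intervalIntegral.integral_const_mul]
    refine intervalIntegral.integral_congr fun x hx => ?_
    rw [Set.uIcc_of_le hab] at hx
    simp only [refHat]
    rw [abs_of_nonpos (by nlinarith [hx.2]), max_eq_right (by nlinarith [hx.1])]
    linear_combination (2 * hMa) * g'' x
  have hr : ∫ x in b..c, refHat (2 * M * x - (2 * q + 1)) * g'' x
      = 2 * M * (-(c - b) * g' b - g b + g c) := by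
    rw [← hright, ← intervalIntegral.integral_const_mul]
    refine intervalIntegral.integral_congr fun x hx => ?_
    rw [Set.uIcc_of_le hbc] at hx
    simp only [refHat]
    rw [abs_of_nonneg (by nlinarith [hx.1]), max_eq_right (by nlinarith [hx.2])]
    linear_combination (-2 * hMc) * g'' x
  have htot : ∫ t in Set.Ioo (0 : ℝ) 1, refHat (2 * M * t - (2 * q + 1)) * g'' t
      = 2 * M * (g a + g c - 2 * g b) := by
    rw [← integral_Ioc_eq_integral_Ioo, ← intervalIntegral.integral_of_le zero_le_one,
      ← intervalIntegral.integral_add_adjacent_intervals (hint hφ le_rfl ha0 (by linarith))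
        (hint hφ ha0 (by linarith) le_rfl),
      ← intervalIntegral.integral_add_adjacent_intervals (hint hφ ha0 hab (by linarith))
        (hint hφ (by linarith) (by linarith) le_rfl),
      ← intervalIntegral.integral_add_adjacent_intervals (hint hφ (by linarith) hbc hc1)
        (hint hφ (by linarith) hc1 le_rfl), hzero ha0 (Or.inl le_rfl),
      hzero hc1 (Or.inr le_rfl), hl, hr]
    linear_combination g' b * (2 * hMb - 2 * hMa - 2 * hMc)
  rw [htot, surplus, ← ha, ← hb, ← hc']
  field_simp
  ring

lemma surplus_nodes_mem {M q : ℕ} (hq : q < M) :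
    ((2 * q + 1) / (2 * M) : ℝ) ∈ Set.Icc (0 : ℝ) 1 ∧ (q / M : ℝ) ∈ Set.Icc (0 : ℝ) 1 ∧
      ((q + 1) / M : ℝ) ∈ Set.Icc (0 : ℝ) 1 := by
  have hM : (0 : ℝ) < M := by exact_mod_cast (by omega : 0 < M)
  have hq1 : (q : ℝ) + 1 ≤ M := by exact_mod_cast hq
  refine ⟨⟨by positivity, ?_⟩, ⟨by positivity, ?_⟩, ⟨by positivity, ?_⟩⟩
  · rw [div_le_one (by positivity)]; linarith
  · rw [div_le_one hM]; linarith
  · rwa [div_le_one hM]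

lemma surplus_congr {M q : ℕ} (hq : q < M) {f g : ℝ → ℝ}
    (h : ∀ s ∈ Set.Icc (0 : ℝ) 1, f s = g s) : surplus M q f = surplus M q g := by
  obtain ⟨h1, h2, h3⟩ := surplus_nodes_mem hq
  simp only [surplus, h _ h1, h _ h2, h _ h3]

lemma surplus_integral {M q : ℕ} {F : ℝ → ℝ → ℝ} {μ : Measure ℝ} (hq : q < M)
    (h : ∀ s ∈ Set.Icc (0 : ℝ) 1, Integrable (F s) μ) :
    surplus M q (fun s => ∫ t, F s t ∂μ) = ∫ t, surplus M q (fun s => F s t) ∂μ := by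
  obtain ⟨h1, h2, h3⟩ := surplus_nodes_mem hq
  simp only [surplus]
  rw [integral_sub (h _ h1) (((h _ h2).fun_add (h _ h3)).div_const 2), integral_div,
    integral_add (h _ h2) (h _ h3)]

lemma surplus_const_mul (M q : ℕ) (a : ℝ) (g : ℝ → ℝ) :
    surplus M q (fun s => a * g s) = a * surplus M q g := by
  simp only [surplus]; ring

lemma isCompact_unitSquare : IsCompact unitSquare := isCompact_Icc.prod isCompact_Icc

lemma Omega2_subset : Omega2 ⊆ unitSquare :=
  Set.prod_mono Set.Ioo_subset_Icc_self Set.Ioo_subset_Icc_self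

lemma measurableSet_Omega2 : MeasurableSet Omega2 := measurableSet_Ioo.prod measurableSet_Ioo

lemma integrable_Omega2 {f : ℝ × ℝ → ℝ} (hf : ContinuousOn f unitSquare) :
    Integrable f (volume.restrict Omega2) :=
  (hf.integrableOn_compact isCompact_unitSquare).mono_set Omega2_subset

lemma volume_restrict_Omega2 : (volume.restrict Omega2 : Measure (ℝ × ℝ))
    = (volume.restrict (Set.Ioo (0 : ℝ) 1)).prod (volume.restrict (Set.Ioo (0 : ℝ) 1)) := by
  rw [Measure.prod_restrict]; rfl

lemma C4Near.continuousOn_uxxyy {u : ℝ × ℝ → ℝ} (hu : C4Near u) :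
    ContinuousOn (uxxyy u) unitSquare := by
  obtain ⟨U, hU, hsU, h⟩ := hu
  have h3 : ContDiffOn ℝ 3 (pderivY u) U := contDiffOn_pderivY (n := 3) hU (by norm_num; exact h)
  have h2 : ContDiffOn ℝ 2 (pderivY (pderivY u)) U :=
    contDiffOn_pderivY (n := 2) hU (by norm_num; exact h3)
  have h1 := contDiffOn_pderivX (n := 1) hU (by norm_num; exact h2)
  exact (contDiffOn_pderivX (n := 0) hU (by simpa using h1)).continuousOn.mono hsU

lemma surplus₂_eq_integral {M L q r : ℕ} (hq : q < M) (hr : r < L) {u : ℝ × ℝ → ℝ}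
    (hu : C4Near u) :
    surplus₂ M L q r u = 1 / (16 * M * L) * ∫ p in Omega2,
      refHat (2 * M * p.1 - (2 * q + 1)) * refHat (2 * L * p.2 - (2 * r + 1)) * uxxyy u p := by
  have hf := hu.continuousOn_uxxyy
  obtain ⟨U, hU, hsU, h⟩ := hu
  have h3 : ContDiffOn ℝ 3 (pderivY u) U := contDiffOn_pderivY (n := 3) hU (by norm_num; exact h)
  have h2 : ContDiffOn ℝ 2 (pderivY (pderivY u)) U :=
    contDiffOn_pderivY (n := 2) hU (by norm_num; exact h3)
  have h1 : ContDiffOn ℝ 1 (pderivX (pderivY (pderivY u))) U :=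
    contDiffOn_pderivX (n := 1) hU (by norm_num; exact h2)
  have hdiff : ∀ {v : ℝ × ℝ → ℝ} {n : WithTop ℕ∞}, ContDiffOn ℝ n v U → n ≠ 0 →
      ∀ p ∈ unitSquare, DifferentiableAt ℝ v p := fun hv hn p hp =>
    (hv.differentiableOn hn).differentiableAt (hU.mem_nhds (hsU hp))
  have hX : ∀ {v : ℝ × ℝ → ℝ} {n : WithTop ℕ∞}, ContDiffOn ℝ n v U → n ≠ 0 →
      ∀ s ∈ Set.Icc (0 : ℝ) 1, ∀ t ∈ Set.Icc (0 : ℝ) 1,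
        HasDerivAt (fun x => v (x, t)) (pderivX v (s, t)) s := fun hv hn s hs t ht => by
    rw [pderivX_eq (hdiff hv hn (s, t) ⟨hs, ht⟩)]
    exact hasDerivAt_pderivX (hdiff hv hn (s, t) ⟨hs, ht⟩)
  have hY : ∀ {v : ℝ × ℝ → ℝ} {n : WithTop ℕ∞}, ContDiffOn ℝ n v U → n ≠ 0 →
      ∀ s ∈ Set.Icc (0 : ℝ) 1, ∀ t ∈ Set.Icc (0 : ℝ) 1,
        HasDerivAt (fun y => v (s, y)) (pderivY v (s, t)) t := fun hv hn s hs t ht => by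
    rw [pderivY_eq (hdiff hv hn (s, t) ⟨hs, ht⟩)]
    exact hasDerivAt_pderivY (hdiff hv hn (s, t) ⟨hs, ht⟩)
  have hsliceY : ∀ {v : ℝ × ℝ → ℝ}, ContinuousOn v unitSquare → ∀ s ∈ Set.Icc (0 : ℝ) 1,
      ContinuousOn (fun t => v (s, t)) (Set.Icc 0 1) := fun hv s hs =>
    hv.comp (by fun_prop) fun t ht => ⟨hs, ht⟩
  have hsliceX : ∀ {v : ℝ × ℝ → ℝ}, ContinuousOn v unitSquare → ∀ t ∈ Set.Icc (0 : ℝ) 1,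
      ContinuousOn (fun s => v (s, t)) (Set.Icc 0 1) := fun hv t ht =>
    hv.comp (by fun_prop) fun s hs => ⟨hs, ht⟩
  have hc2 : ContinuousOn (pderivY (pderivY u)) unitSquare := h2.continuousOn.mono hsU
  have hχ : Continuous fun t : ℝ => refHat (2 * L * t - (2 * r + 1)) :=
    continuous_refHat.comp (by fun_prop)
  have hφ : Continuous fun t : ℝ => refHat (2 * M * t - (2 * q + 1)) :=
    continuous_refHat.comp (by fun_prop)
  have hin : ∀ s ∈ Set.Icc (0 : ℝ) 1, surplus L r (fun t => u (s, t))
      = -(1 / (4 * L)) * ∫ t in Set.Ioo (0 : ℝ) 1,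
        refHat (2 * L * t - (2 * r + 1)) * pderivY (pderivY u) (s, t) := fun s hs =>
    surplus_eq_integral hr (fun t ht => hY h (by norm_num) s hs t ht)
      (fun t ht => hY h3 (by norm_num) s hs t ht) (hsliceY hc2 s hs)
  have hint : ∀ s ∈ Set.Icc (0 : ℝ) 1, Integrable (fun t => refHat (2 * L * t - (2 * r + 1))
      * pderivY (pderivY u) (s, t)) (volume.restrict (Set.Ioo (0 : ℝ) 1)) := fun s hs =>
    ((hχ.continuousOn.mul (hsliceY hc2 s hs)).integrableOn_compact isCompact_Icc).mono_set
      Set.Ioo_subset_Icc_self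
  have hstep : surplus₂ M L q r u = surplus M q (fun s => -(1 / (4 * L)) *
      ∫ t in Set.Ioo (0 : ℝ) 1,
        refHat (2 * L * t - (2 * r + 1)) * pderivY (pderivY u) (s, t)) :=
    surplus_congr hq hin
  have hcont : ContinuousOn (fun p : ℝ × ℝ => refHat (2 * M * p.1 - (2 * q + 1))
      * refHat (2 * L * p.2 - (2 * r + 1)) * uxxyy u p) unitSquare :=
    (((hφ.comp continuous_fst).mul (hχ.comp continuous_snd)).continuousOn).mul hf
  have hI := integrable_Omega2 hcont
  rw [volume_restrict_Omega2] at hI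
  rw [hstep, surplus_const_mul, surplus_integral hq hint, volume_restrict_Omega2,
    integral_prod_symm _ hI]
  have hfin : ∀ t ∈ Set.Ioo (0 : ℝ) 1, surplus M q (fun s => refHat (2 * L * t - (2 * r + 1))
      * pderivY (pderivY u) (s, t)) = -(1 / (4 * M)) * ∫ s in Set.Ioo (0 : ℝ) 1,
        refHat (2 * M * s - (2 * q + 1)) * refHat (2 * L * t - (2 * r + 1)) * uxxyy u (s, t) := by
    intro t ht
    have ht' := Set.Ioo_subset_Icc_self ht
    rw [surplus_const_mul, surplus_eq_integral hq (fun s hs => hX h2 (by norm_num) s hs t ht')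
      (fun s hs => hX h1 (by norm_num) s hs t ht') (hsliceX hf t ht'), mul_left_comm,
      ← integral_const_mul]
    congr 1
    refine integral_congr_ae (Filter.Eventually.of_forall fun s => ?_)
    simp only [uxxyy]; ring
  rw [setIntegral_congr_fun measurableSet_Ioo hfin, integral_const_mul]
  ring

lemma isFiniteMeasure_Omega2 : IsFiniteMeasure (volume.restrict Omega2 : Measure (ℝ × ℝ)) := by
  rw [volume_restrict_Omega2]; infer_instance

lemma refBump_nonneg (t : ℝ) : 0 ≤ refBump t := by
  unfold refBump; split_ifs <;> norm_num

lemma refBump_le_one (t : ℝ) : refBump t ≤ 1 := by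
  unfold refBump; split_ifs <;> norm_num

lemma refBump_mul_eq_zero (z : ℝ) {q q' : ℕ} (h : q ≠ q') :
    refBump (z - (2 * q + 1)) * refBump (z - (2 * q' + 1)) = 0 := by
  unfold refBump
  split_ifs with h1 h2 <;> try simp
  exfalso
  apply h
  have e1 : (q : ℝ) < q' + 1 := by linarith [h1.1, h2.2]
  have e2 : (q' : ℝ) < q + 1 := by linarith [h1.2, h2.1]
  norm_cast at e1 e2
  omega

lemma integral_refBump_le {M : ℕ} (hM : 0 < M) (q : ℕ) :
    ∫ x in Set.Ioo (0 : ℝ) 1, refBump (2 * M * x - (2 * q + 1)) ≤ 1 / M := by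
  have hM' : (0 : ℝ) < M := by exact_mod_cast hM
  have hind : (fun x : ℝ => refBump (2 * M * x - (2 * q + 1)))
      = (Set.Ioo (q / M : ℝ) ((q + 1) / M)).indicator 1 := by
    funext x
    rw [Set.indicator_apply]
    simp only [refBump, Set.mem_Ioo, div_lt_iff₀ hM', lt_div_iff₀ hM', Pi.one_apply]
    congr 1
    apply propext
    constructor <;> rintro ⟨h1, h2⟩ <;> constructor <;> linarith
  rw [hind, integral_indicator_one measurableSet_Ioo]
  calc (volume.restrict (Set.Ioo (0 : ℝ) 1)).real (Set.Ioo (q / M : ℝ) ((q + 1) / M))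
      ≤ volume.real (Set.Ioo (q / M : ℝ) ((q + 1) / M)) :=
        ENNReal.toReal_mono (by simp) (Measure.restrict_le_self _)
    _ = 1 / M := by
        rw [Real.volume_real_Ioo_of_le (by gcongr; linarith)]; ring

/-- The indicator function of a cell of the `M × L` mesh. -/
def cellBump (M L : ℕ) (a : ℕ × ℕ) (p : ℝ × ℝ) : ℝ :=
  refBump (2 * M * p.1 - (2 * a.1 + 1)) * refBump (2 * L * p.2 - (2 * a.2 + 1))

lemma cellBump_nonneg (M L : ℕ) (a : ℕ × ℕ) (p : ℝ × ℝ) : 0 ≤ cellBump M L a p :=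
  mul_nonneg (refBump_nonneg _) (refBump_nonneg _)

lemma cellBump_le_one (M L : ℕ) (a : ℕ × ℕ) (p : ℝ × ℝ) : cellBump M L a p ≤ 1 :=
  mul_le_one₀ (refBump_le_one _) (refBump_nonneg _) (refBump_le_one _)

lemma cellBump_mul_eq_zero (M L : ℕ) {a b : ℕ × ℕ} (h : a ≠ b) (p : ℝ × ℝ) :
    cellBump M L a p * cellBump M L b p = 0 := by
  unfold cellBump
  rw [mul_mul_mul_comm]
  by_cases h1 : a.1 = b.1
  · rw [refBump_mul_eq_zero _ (fun h2 => h (Prod.ext h1 h2)), mul_zero]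
  · rw [refBump_mul_eq_zero _ h1, zero_mul]

lemma measurable_cellBump (M L : ℕ) (a : ℕ × ℕ) : Measurable (cellBump M L a) :=
  (measurable_refBump.comp (by fun_prop)).mul (measurable_refBump.comp (by fun_prop))

lemma integrable_cellBump (M L : ℕ) (a : ℕ × ℕ) :
    Integrable (cellBump M L a) (volume.restrict Omega2) := by
  have := isFiniteMeasure_Omega2
  refine Integrable.of_bound (measurable_cellBump M L a).aestronglyMeasurable 1
    (Filter.Eventually.of_forall fun p => ?_)
  rw [Real.norm_of_nonneg (cellBump_nonneg _ _ _ _)]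
  exact cellBump_le_one _ _ _ _

lemma integral_cellBump_le {M L : ℕ} (hM : 0 < M) (hL : 0 < L) (a : ℕ × ℕ) :
    ∫ p in Omega2, cellBump M L a p ≤ 1 / (M * L) := by
  unfold cellBump
  rw [volume_restrict_Omega2, integral_prod_mul (fun x => refBump (2 * M * x - (2 * a.1 + 1)))
    (fun y => refBump (2 * L * y - (2 * a.2 + 1))), ← one_div_mul_one_div]
  exact mul_le_mul (integral_refBump_le hM _) (integral_refBump_le hL _)
    (integral_nonneg fun _ => refBump_nonneg _) (by positivity)

lemma sum_sq_of_mul_eq_zero {ι : Type*} (s : Finset ι) (f : ι → ℝ)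
    (h : ∀ i j, i ≠ j → f i * f j = 0) : (∑ i ∈ s, f i) ^ 2 = ∑ i ∈ s, f i ^ 2 := by
  rw [sq, Finset.sum_mul_sum]
  refine Finset.sum_congr rfl fun i hi => ?_
  rw [Finset.sum_eq_single_of_mem i hi fun j _ hj => h i j hj.symm, sq]

lemma sum_cellBump_le_one (M L : ℕ) (s : Finset (ℕ × ℕ)) (p : ℝ × ℝ) :
    ∑ a ∈ s, cellBump M L a p ≤ 1 := by
  have h := sum_sq_of_mul_eq_zero s (fun a => cellBump M L a p)
    fun a b hab => cellBump_mul_eq_zero M L hab p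
  have h2 : ∑ a ∈ s, cellBump M L a p ^ 2 ≤ ∑ a ∈ s, cellBump M L a p :=
    Finset.sum_le_sum fun a _ => by
      nlinarith [cellBump_nonneg M L a p, cellBump_le_one M L a p]
  nlinarith

lemma tensorSum_eq (M L : ℕ) (c : ℕ → ℕ → ℝ) (α β : ℝ → ℝ) (p : ℝ × ℝ) :
    tensorSum M L c α β p = ∑ a ∈ range M ×ˢ range L, c a.1 a.2
      * α (2 * M * p.1 - (2 * a.1 + 1)) * β (2 * L * p.2 - (2 * a.2 + 1)) := by
  rw [Finset.sum_product]; rfl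

lemma tensorSum_sq_le (M L : ℕ) (c : ℕ → ℕ → ℝ) {α β : ℝ → ℝ} (hα : ∀ t, |α t| ≤ refBump t)
    (hβ : ∀ t, |β t| ≤ refBump t) (p : ℝ × ℝ) :
    tensorSum M L c α β p ^ 2
      ≤ ∑ a ∈ range M ×ˢ range L, c a.1 a.2 ^ 2 * cellBump M L a p := by
  have hab : ∀ a : ℕ × ℕ, |α (2 * M * p.1 - (2 * a.1 + 1)) * β (2 * L * p.2 - (2 * a.2 + 1))|
      ≤ cellBump M L a p := fun a => by
    rw [abs_mul]
    exact mul_le_mul (hα _) (hβ _) (abs_nonneg _) (refBump_nonneg _)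
  rw [tensorSum_eq, sum_sq_of_mul_eq_zero]
  · refine Finset.sum_le_sum fun a _ => ?_
    rw [mul_assoc, mul_pow]
    refine mul_le_mul_of_nonneg_left ?_ (sq_nonneg _)
    rw [← sq_abs]
    nlinarith [hab a, cellBump_nonneg M L a p, cellBump_le_one M L a p,
      abs_nonneg (α (2 * M * p.1 - (2 * a.1 + 1)) * β (2 * L * p.2 - (2 * a.2 + 1)))]
  · intro a b hne
    have h := mul_le_mul (hab a) (hab b) (abs_nonneg _) (cellBump_nonneg M L a p)
    rw [cellBump_mul_eq_zero M L hne, ← abs_mul] at h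
    have h0 := abs_eq_zero.1 (le_antisymm h (abs_nonneg _))
    linear_combination c a.1 a.2 * c b.1 b.2 * h0

lemma measurable_tensorSum (M L : ℕ) (c : ℕ → ℕ → ℝ) {α β : ℝ → ℝ} (hα : Measurable α)
    (hβ : Measurable β) : Measurable (tensorSum M L c α β) := by
  unfold tensorSum
  refine Finset.measurable_fun_sum _ fun q _ => Finset.measurable_fun_sum _ fun r _ => ?_
  exact ((hα.comp (by fun_prop)).const_mul _).mul (hβ.comp (by fun_prop))

lemma integrable_sum_cellBump (M L : ℕ) (c : ℕ → ℕ → ℝ) :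
    Integrable (fun p => ∑ a ∈ range M ×ˢ range L, c a.1 a.2 ^ 2 * cellBump M L a p)
      (volume.restrict Omega2) :=
  integrable_finsetSum _ fun a _ => (integrable_cellBump M L a).const_mul _

lemma integrable_tensorSum_sq (M L : ℕ) (c : ℕ → ℕ → ℝ) {α β : ℝ → ℝ}
    (hα : ∀ t, |α t| ≤ refBump t) (hβ : ∀ t, |β t| ≤ refBump t) (mα : Measurable α)
    (mβ : Measurable β) :
    Integrable (fun p => tensorSum M L c α β p ^ 2) (volume.restrict Omega2) := by
  refine (integrable_sum_cellBump M L c).mono'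
    ((measurable_tensorSum M L c mα mβ).pow_const 2).aestronglyMeasurable
    (Filter.Eventually.of_forall fun p => ?_)
  rw [Real.norm_of_nonneg (sq_nonneg _)]
  exact tensorSum_sq_le M L c hα hβ p

lemma integral_tensorSum_sq_le {M L : ℕ} (hM : 0 < M) (hL : 0 < L) (c : ℕ → ℕ → ℝ) {α β : ℝ → ℝ}
    (hα : ∀ t, |α t| ≤ refBump t) (hβ : ∀ t, |β t| ≤ refBump t) :
    ∫ p in Omega2, tensorSum M L c α β p ^ 2
      ≤ (∑ a ∈ range M ×ˢ range L, c a.1 a.2 ^ 2) * (1 / (M * L)) := by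
  calc ∫ p in Omega2, tensorSum M L c α β p ^ 2
      ≤ ∫ p in Omega2, ∑ a ∈ range M ×ˢ range L, c a.1 a.2 ^ 2 * cellBump M L a p :=
        integral_mono_of_nonneg (Filter.Eventually.of_forall fun p => sq_nonneg _)
          (integrable_sum_cellBump M L c)
          (Filter.Eventually.of_forall fun p => tensorSum_sq_le M L c hα hβ p)
    _ = ∑ a ∈ range M ×ˢ range L, c a.1 a.2 ^ 2 * ∫ p in Omega2, cellBump M L a p := by
        rw [integral_finsetSum _ fun a _ => (integrable_cellBump M L a).const_mul _]
        exact Finset.sum_congr rfl fun a _ => integral_const_mul _ _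
    _ ≤ _ := by
        rw [Finset.sum_mul]
        exact Finset.sum_le_sum fun a _ =>
          mul_le_mul_of_nonneg_left (integral_cellBump_le hM hL a) (sq_nonneg _)

lemma sq_integral_mul_le {X : Type*} [MeasurableSpace X] {μ : Measure X} {φ f : X → ℝ}
    (hφ : ∀ x, 0 ≤ φ x) (h0 : Integrable φ μ) (h1 : Integrable (fun x => φ x * f x) μ)
    (h2 : Integrable (fun x => φ x * f x ^ 2) μ) :
    (∫ x, φ x * f x ∂μ) ^ 2 ≤ (∫ x, φ x ∂μ) * ∫ x, φ x * f x ^ 2 ∂μ := by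
  have h : ∀ z : ℝ, 0 ≤ (∫ x, φ x ∂μ) * (z * z) + (-2 * ∫ x, φ x * f x ∂μ) * z
      + ∫ x, φ x * f x ^ 2 ∂μ := by
    intro z
    have hexp : ∫ x, φ x * (f x - z) ^ 2 ∂μ = (∫ x, φ x ∂μ) * (z * z)
        + (-2 * ∫ x, φ x * f x ∂μ) * z + ∫ x, φ x * f x ^ 2 ∂μ := by
      rw [← integral_const_mul, ← integral_mul_const, ← integral_mul_const,
        ← integral_add (h0.mul_const _) ((h1.const_mul _).mul_const _),
        ← integral_add ((h0.mul_const _).fun_add ((h1.const_mul _).mul_const _)) h2]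
      exact integral_congr_ae (Filter.Eventually.of_forall fun x => by ring)
    rw [← hexp]
    exact integral_nonneg fun x => mul_nonneg (hφ x) (sq_nonneg _)
  have := discrim_le_zero h
  rw [discrim] at this
  nlinarith

lemma sum_sq_surplus₂_le {M L : ℕ} (hM : 0 < M) (hL : 0 < L) {u : ℝ × ℝ → ℝ} (hu : C4Near u) :
    ∑ a ∈ range M ×ˢ range L, surplus₂ M L a.1 a.2 u ^ 2
      ≤ (1 / (16 * M * L)) ^ 2 * (1 / (M * L)) * ∫ p in Omega2, uxxyy u p ^ 2 := by
  have hf := hu.continuousOn_uxxyy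
  set f := uxxyy u
  set φ : ℕ × ℕ → ℝ × ℝ → ℝ := fun a p =>
    refHat (2 * M * p.1 - (2 * a.1 + 1)) * refHat (2 * L * p.2 - (2 * a.2 + 1))
  have hφc : ∀ a, Continuous (φ a) := fun a =>
    (continuous_refHat.comp (by fun_prop)).mul (continuous_refHat.comp (by fun_prop))
  have hφ0 : ∀ a p, 0 ≤ φ a p := fun a p => mul_nonneg (refHat_nonneg _) (refHat_nonneg _)
  have hφb : ∀ a p, φ a p ≤ cellBump M L a p := fun a p =>
    mul_le_mul ((le_abs_self _).trans (abs_refHat_le _)) ((le_abs_self _).trans (abs_refHat_le _))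
      (refHat_nonneg _) (refBump_nonneg _)
  have i0 : ∀ a, Integrable (φ a) (volume.restrict Omega2) := fun a =>
    integrable_Omega2 (hφc a).continuousOn
  have i1 : ∀ a, Integrable (fun p => φ a p * f p) (volume.restrict Omega2) := fun a =>
    integrable_Omega2 ((hφc a).continuousOn.mul hf)
  have i2 : ∀ a, Integrable (fun p => φ a p * f p ^ 2) (volume.restrict Omega2) := fun a =>
    integrable_Omega2 ((hφc a).continuousOn.mul (hf.pow 2))
  have hterm : ∀ a ∈ range M ×ˢ range L, surplus₂ M L a.1 a.2 u ^ 2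
      ≤ (1 / (16 * M * L)) ^ 2 * (1 / (M * L)) * ∫ p in Omega2, φ a p * f p ^ 2 := by
    intro a ha
    rw [Finset.mem_product, Finset.mem_range, Finset.mem_range] at ha
    rw [surplus₂_eq_integral ha.1 ha.2 hu, mul_pow,
      mul_assoc ((1 / (16 * (M : ℝ) * L)) ^ 2)]
    refine mul_le_mul_of_nonneg_left ?_ (sq_nonneg _)
    refine (sq_integral_mul_le (hφ0 a) (i0 a) (i1 a) (i2 a)).trans ?_
    refine mul_le_mul_of_nonneg_right ?_
      (integral_nonneg fun p => mul_nonneg (hφ0 a p) (sq_nonneg _))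
    exact (integral_mono (i0 a) (integrable_cellBump M L a) (hφb a)).trans
      (integral_cellBump_le hM hL a)
  refine (Finset.sum_le_sum hterm).trans ?_
  rw [← Finset.mul_sum, ← integral_finsetSum _ fun a _ => i2 a]
  refine mul_le_mul_of_nonneg_left ?_ (by positivity)
  refine integral_mono (integrable_finsetSum _ fun a _ => i2 a) (integrable_Omega2 (hf.pow 2))
    fun p => ?_
  have hsum : ∑ a ∈ range M ×ˢ range L, φ a p ≤ 1 :=
    (Finset.sum_le_sum fun a _ => hφb a p).trans (sum_cellBump_le_one M L _ p)
  rw [← Finset.sum_mul]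
  exact mul_le_of_le_one_left (sq_nonneg (f p)) hsum

lemma integral_sq_sum_le {X ι : Type*} [MeasurableSpace X] {μ : Measure X} (s : Finset ι)
    {g : ι → X → ℝ} {w : ι → ℝ} {A : ℝ} (hw : ∀ i ∈ s, 0 < w i)
    (hg : ∀ i ∈ s, Integrable (fun x => g i x ^ 2) μ)
    (hle : ∀ i ∈ s, ∫ x, g i x ^ 2 ∂μ ≤ w i ^ 2 * A) :
    ∫ x, (∑ i ∈ s, g i x) ^ 2 ∂μ ≤ (∑ i ∈ s, w i) ^ 2 * A := by
  have hint : ∀ i ∈ s, Integrable (fun x => g i x ^ 2 / w i) μ := fun i hi =>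
    (hg i hi).div_const _
  have hw0 : 0 ≤ ∑ i ∈ s, w i := Finset.sum_nonneg fun i hi => (hw i hi).le
  calc ∫ x, (∑ i ∈ s, g i x) ^ 2 ∂μ
      ≤ ∫ x, (∑ i ∈ s, w i) * ∑ i ∈ s, g i x ^ 2 / w i ∂μ := by
        refine integral_mono_of_nonneg (Filter.Eventually.of_forall fun x => sq_nonneg _)
          ((integrable_finsetSum s hint).const_mul _) (Filter.Eventually.of_forall fun x => ?_)
        refine Finset.sum_sq_le_sum_mul_sum_of_sq_le_mul s (fun i hi => (hw i hi).le)
          (fun i hi => div_nonneg (sq_nonneg _) (hw i hi).le) fun i hi => ?_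
        exact (mul_div_cancel₀ _ (hw i hi).ne').ge
    _ = (∑ i ∈ s, w i) * ∑ i ∈ s, (∫ x, g i x ^ 2 ∂μ) / w i := by
        rw [integral_const_mul, integral_finsetSum s hint]
        simp only [integral_div]
    _ ≤ (∑ i ∈ s, w i) * ∑ i ∈ s, w i * A := by
        refine mul_le_mul_of_nonneg_left (Finset.sum_le_sum fun i hi => ?_) hw0
        rw [div_le_iff₀ (hw i hi)]
        linarith [hle i hi]
    _ = (∑ i ∈ s, w i) ^ 2 * A := by rw [← Finset.sum_mul]; ring

lemma hasDerivAt_refHat_affine {x : ℝ} (hx : Irrational x) {M : ℕ} (hM : 0 < M) (q : ℕ) :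
    HasDerivAt (fun z => refHat (2 * M * z - (2 * q + 1)))
      (2 * M * refHatDeriv (2 * M * x - (2 * q + 1))) x := by
  have hirr : Irrational (2 * M * x - (2 * q + 1)) := by
    have h := (hx.natCast_mul (show 2 * M ≠ 0 by omega)).sub_natCast (2 * q + 1)
    push_cast at h
    exact h
  have hd := hasDerivAt_refHat hirr.ne_zero hirr.ne_one
    (by simpa using hirr.ne_int (-1))
  have haff : HasDerivAt (fun z : ℝ => 2 * M * z - (2 * q + 1)) (2 * M) x := by
    simpa using ((hasDerivAt_id x).const_mul (2 * M : ℝ)).sub_const (2 * q + 1 : ℝ)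
  rw [mul_comm (2 * (M : ℝ))]
  exact HasDerivAt.comp (h₂ := refHat) x hd haff

lemma hasDerivAt_tensorSum_fst {M : ℕ} (hM : 0 < M) (L : ℕ) (c : ℕ → ℕ → ℝ) (β : ℝ → ℝ)
    {p : ℝ × ℝ} (hp : Irrational p.1) :
    HasDerivAt (fun x => tensorSum M L c refHat β (x, p.2))
      (2 * M * tensorSum M L c refHatDeriv β p) p.1 := by
  simp only [tensorSum, Finset.mul_sum]
  refine HasDerivAt.fun_sum fun q _ => HasDerivAt.fun_sum fun r _ => ?_
  have h := ((hasDerivAt_refHat_affine hp hM q).const_mul (c q r)).mul_const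
    (β (2 * L * p.2 - (2 * r + 1)))
  exact h.congr_deriv (by ring)

lemma hasDerivAt_tensorSum_snd (M : ℕ) {L : ℕ} (hL : 0 < L) (c : ℕ → ℕ → ℝ) (α : ℝ → ℝ)
    {p : ℝ × ℝ} (hp : Irrational p.2) :
    HasDerivAt (fun y => tensorSum M L c α refHat (p.1, y))
      (2 * L * tensorSum M L c α refHatDeriv p) p.2 := by
  simp only [tensorSum, Finset.mul_sum]
  refine HasDerivAt.fun_sum fun q _ => HasDerivAt.fun_sum fun r _ => ?_
  have h := (hasDerivAt_refHat_affine hp hL r).const_mul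
    (c q r * α (2 * M * p.1 - (2 * q + 1)))
  exact h.congr_deriv (by ring)

lemma ae_irrational_volume : ∀ᵐ x : ℝ, Irrational x :=
  (Set.countable_range ((↑) : ℚ → ℝ)).ae_notMem volume

lemma ae_irrational_prod : ∀ᵐ p : ℝ × ℝ, Irrational p.1 ∧ Irrational p.2 := by
  rw [Measure.volume_eq_prod]
  exact (Measure.quasiMeasurePreserving_fst.ae ae_irrational_volume).and
    (Measure.quasiMeasurePreserving_snd.ae ae_irrational_volume)

lemma integral_surplus_tensorSum_sq_le {M L : ℕ} (hM : 0 < M) (hL : 0 < L) {u : ℝ × ℝ → ℝ}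
    (hu : C4Near u) {α β : ℝ → ℝ} (hα : ∀ t, |α t| ≤ refBump t) (hβ : ∀ t, |β t| ≤ refBump t) :
    ∫ p in Omega2, tensorSum M L (fun q r => surplus₂ M L q r u) α β p ^ 2
      ≤ (1 / (16 * M ^ 2 * L ^ 2)) ^ 2 * ∫ p in Omega2, uxxyy u p ^ 2 := by
  refine (integral_tensorSum_sq_le hM hL _ hα hβ).trans ?_
  refine (mul_le_mul_of_nonneg_right (sum_sq_surplus₂_le hM hL hu) (by positivity)).trans ?_
  refine le_of_eq ?_
  have hM' : (0 : ℝ) < M := by exact_mod_cast hM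
  have hL' : (0 : ℝ) < L := by exact_mod_cast hL
  field_simp

lemma integral_sq_sum_tensorSum_le {n : ℕ} {M L : ℕ → ℕ} (hM : ∀ i, 0 < M i) (hL : ∀ i, 0 < L i)
    {u : ℝ × ℝ → ℝ} (hu : C4Near u) {α β : ℝ → ℝ} (hα : ∀ t, |α t| ≤ refBump t)
    (hβ : ∀ t, |β t| ≤ refBump t) (mα : Measurable α) (mβ : Measurable β) {a : ℕ → ℝ}
    (ha : ∀ i, 0 < a i) :
    Integrable (fun p => (∑ i ∈ range n, a i *
        tensorSum (M i) (L i) (fun q r => surplus₂ (M i) (L i) q r u) α β p) ^ 2)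
        (volume.restrict Omega2) ∧
      ∫ p in Omega2, (∑ i ∈ range n, a i *
        tensorSum (M i) (L i) (fun q r => surplus₂ (M i) (L i) q r u) α β p) ^ 2
      ≤ (∑ i ∈ range n, a i * (1 / (16 * (M i) ^ 2 * (L i) ^ 2))) ^ 2
        * ∫ p in Omega2, uxxyy u p ^ 2 := by
  have hsq : ∀ i, Integrable (fun p => (a i *
      tensorSum (M i) (L i) (fun q r => surplus₂ (M i) (L i) q r u) α β p) ^ 2)
      (volume.restrict Omega2) := fun i => by
    simp only [mul_pow]
    exact (integrable_tensorSum_sq _ _ _ hα hβ mα mβ).const_mul _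
  constructor
  · refine MemLp.integrable_sq (memLp_finsetSum _ fun i _ => ?_)
    rw [memLp_two_iff_integrable_sq
      ((measurable_tensorSum _ _ _ mα mβ).const_mul _).aestronglyMeasurable]
    exact hsq i
  · refine integral_sq_sum_le _ (fun i _ => ?_) (fun i _ => hsq i) fun i _ => ?_
    · have h1 : (0 : ℝ) < M i := by exact_mod_cast hM i
      have h2 : (0 : ℝ) < L i := by exact_mod_cast hL i
      have := ha i
      positivity
    · simp only [mul_pow (a i)]
      rw [integral_const_mul, mul_assoc]
      exact mul_le_mul_of_nonneg_left
        (integral_surplus_tensorSum_sq_le (hM i) (hL i) hu hα hβ) (sq_nonneg _)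

lemma sum_range_inv_two_pow_le (n : ℕ) : ∑ i ∈ range n, (1 / 2 ^ i : ℝ) ≤ 2 := by
  have h : ∑ i ∈ range n, (1 / 2 ^ i : ℝ) = 2 - 2 / 2 ^ n := by
    induction n with
    | zero => simp
    | succ n ih => rw [Finset.sum_range_succ, ih, pow_succ]; field_simp; ring
  rw [h]
  linarith [show (0 : ℝ) ≤ 2 / 2 ^ n by positivity]

lemma sum_range_two_pow_le (n : ℕ) : ∑ i ∈ range n, (2 ^ i : ℝ) ≤ 2 ^ n := by
  induction n with
  | zero => simp
  | succ n ih => rw [Finset.sum_range_succ, pow_succ]; linarith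

lemma two_pow_sub_cast {m j : ℕ} (h : j + 1 ≤ m) :
    ((2 ^ (m - 1 - j) : ℕ) : ℝ) = 2 ^ m / (2 * 2 ^ j) := by
  rw [eq_div_iff (by positivity), ← pow_succ']
  push_cast
  rw [← pow_add]
  congr 1
  omega

lemma energyNorm_msInterp_sub_le {m k : ℕ} (hkm : k + 1 ≤ m) {u : ℝ × ℝ → ℝ} (hu : C4Near u) :
    energyNorm (fun p => msInterp (2 ^ m) (k + 1) u p - msInterp (2 ^ m) k u p)
      ≤ ((k + 1) * 4 ^ k / (2 ^ m) ^ 4 + 4 * 4 ^ k / (2 ^ m) ^ 3) * L2norm (uxxyy u) := by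
  set M : ℕ → ℕ := fun i => 2 ^ (m - 1 - i) with hMdef
  set L : ℕ → ℕ := fun i => 2 ^ (m - 1 - (k - i)) with hLdef
  have hM : ∀ i, 0 < M i := fun i => by positivity
  have hL : ∀ i, 0 < L i := fun i => by positivity
  have hMc : ∀ i ∈ range (k + 1), (M i : ℝ) = 2 ^ m / (2 * 2 ^ i) := fun i hi =>
    two_pow_sub_cast (by have := Finset.mem_range.1 hi; omega)
  have hLc : ∀ i ∈ range (k + 1), (L i : ℝ) = 2 ^ m * 2 ^ i / (2 * 2 ^ k) := fun i hi => by
    have hi' := Finset.mem_range.1 hi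
    rw [show (L i : ℝ) = 2 ^ m / (2 * 2 ^ (k - i)) from two_pow_sub_cast (by omega),
      div_eq_div_iff (by positivity) (by positivity)]
    rw [show (2 : ℝ) ^ k = 2 ^ i * 2 ^ (k - i) by rw [← pow_add]; congr 1; omega]
    ring
  have h4 : (4 : ℝ) ^ k = 2 ^ k * 2 ^ k := by rw [← mul_pow]; norm_num
  set T : (ℝ → ℝ) → (ℝ → ℝ) → ℕ → ℝ × ℝ → ℝ := fun α β i p =>
    tensorSum (M i) (L i) (fun q r => surplus₂ (M i) (L i) q r u) α β p with hT
  set V : ℝ × ℝ → ℝ := fun p => ∑ i ∈ range (k + 1), 1 * T refHat refHat i p with hV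
  set VX : ℝ × ℝ → ℝ := fun p => ∑ i ∈ range (k + 1), 2 * M i * T refHatDeriv refHat i p
  set VY : ℝ × ℝ → ℝ := fun p => ∑ i ∈ range (k + 1), 2 * L i * T refHat refHatDeriv i p
  set A : ℝ := ∫ p in Omega2, uxxyy u p ^ 2
  have hA0 : 0 ≤ A := integral_nonneg fun p => sq_nonneg _
  have hdiff : ∀ p ∈ unitSquare,
      msInterp (2 ^ m) (k + 1) u p - msInterp (2 ^ m) k u p = -V p := fun p hp => by
    rw [msInterp_sub_eq hkm u hp]
    simp only [hV, one_mul, hT, hMdef, hLdef]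
  have hderiv : ∀ᵐ p ∂(volume.restrict Omega2),
      (pderivX (fun p => msInterp (2 ^ m) (k + 1) u p - msInterp (2 ^ m) k u p) p) ^ 2
        + (pderivY (fun p => msInterp (2 ^ m) (k + 1) u p - msInterp (2 ^ m) k u p) p) ^ 2
        + (msInterp (2 ^ m) (k + 1) u p - msInterp (2 ^ m) k u p) ^ 2
      = VX p ^ 2 + VY p ^ 2 + V p ^ 2 := by
    filter_upwards [ae_restrict_mem measurableSet_Omega2, ae_restrict_of_ae ae_irrational_prod]
      with p hp hirr
    have hX : HasDerivAt (fun x => V (x, p.2)) (VX p) p.1 :=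
      HasDerivAt.fun_sum fun i _ => by
        simpa using hasDerivAt_tensorSum_fst (hM i) (L i) _ refHat hirr.1
    have hY : HasDerivAt (fun y => V (p.1, y)) (VY p) p.2 :=
      HasDerivAt.fun_sum fun i _ => by
        simpa using hasDerivAt_tensorSum_snd (M i) (hL i) _ refHat hirr.2
    have eX : pderivX (fun p => msInterp (2 ^ m) (k + 1) u p - msInterp (2 ^ m) k u p) p
        = -VX p := by
      refine (hX.neg.congr_of_eventuallyEq ?_).deriv
      filter_upwards [Ioo_mem_nhds hp.1.1 hp.1.2] with x hx
      exact hdiff (x, p.2) (Omega2_subset ⟨hx, hp.2⟩)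
    have eY : pderivY (fun p => msInterp (2 ^ m) (k + 1) u p - msInterp (2 ^ m) k u p) p
        = -VY p := by
      refine (hY.neg.congr_of_eventuallyEq ?_).deriv
      filter_upwards [Ioo_mem_nhds hp.2.1 hp.2.2] with y hy
      exact hdiff (p.1, y) (Omega2_subset ⟨hp.1, hy⟩)
    rw [eX, eY, hdiff p (Omega2_subset hp)]
    ring
  have mH := continuous_refHat.measurable
  obtain ⟨iV, bV⟩ := integral_sq_sum_tensorSum_le (n := k + 1) hM hL hu abs_refHat_le abs_refHat_le
    mH mH (a := fun _ => 1) fun _ => one_pos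
  obtain ⟨iX, bX⟩ := integral_sq_sum_tensorSum_le (n := k + 1) hM hL hu abs_refHatDeriv_le
    abs_refHat_le measurable_refHatDeriv mH (a := fun i => 2 * (M i : ℝ))
    fun i => by have := hM i; positivity
  obtain ⟨iY, bY⟩ := integral_sq_sum_tensorSum_le (n := k + 1) hM hL hu abs_refHat_le
    abs_refHatDeriv_le mH measurable_refHatDeriv (a := fun i => 2 * (L i : ℝ))
    fun i => by have := hL i; positivity
  set N : ℝ := 2 ^ m
  have hN0 : 0 < N := by positivity
  have sV : ∑ i ∈ range (k + 1), 1 * (1 / (16 * (M i : ℝ) ^ 2 * (L i : ℝ) ^ 2))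
      = (k + 1) * 4 ^ k / N ^ 4 := by
    have hterm : ∀ i ∈ range (k + 1), 1 * (1 / (16 * (M i : ℝ) ^ 2 * (L i : ℝ) ^ 2))
        = 4 ^ k / N ^ 4 := fun i hi => by
      rw [hMc i hi, hLc i hi, h4]; field_simp; norm_num
    rw [Finset.sum_congr rfl hterm, Finset.sum_const, Finset.card_range, nsmul_eq_mul]
    push_cast; ring
  have sX : ∑ i ∈ range (k + 1), 2 * (M i : ℝ) * (1 / (16 * (M i : ℝ) ^ 2 * (L i : ℝ) ^ 2))
      ≤ 2 * 4 ^ k / N ^ 3 := by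
    have hterm : ∀ i ∈ range (k + 1),
        2 * (M i : ℝ) * (1 / (16 * (M i : ℝ) ^ 2 * (L i : ℝ) ^ 2))
        = 4 ^ k / N ^ 3 * (1 / 2 ^ i) := fun i hi => by
      rw [hMc i hi, hLc i hi, h4]; field_simp; norm_num
    rw [Finset.sum_congr rfl hterm, ← Finset.mul_sum, mul_comm (2 : ℝ), mul_div_right_comm]
    exact mul_le_mul_of_nonneg_left (sum_range_inv_two_pow_le _) (by positivity)
  have sY : ∑ i ∈ range (k + 1), 2 * (L i : ℝ) * (1 / (16 * (M i : ℝ) ^ 2 * (L i : ℝ) ^ 2))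
      ≤ 2 * 4 ^ k / N ^ 3 := by
    have hterm : ∀ i ∈ range (k + 1),
        2 * (L i : ℝ) * (1 / (16 * (M i : ℝ) ^ 2 * (L i : ℝ) ^ 2))
        = 2 ^ k / N ^ 3 * 2 ^ i := fun i hi => by
      rw [hMc i hi, hLc i hi]; field_simp; norm_num
    rw [Finset.sum_congr rfl hterm, ← Finset.mul_sum, h4]
    refine (mul_le_mul_of_nonneg_left (sum_range_two_pow_le _) (by positivity)).trans (le_of_eq ?_)
    rw [pow_succ]; ring
  rw [sV] at bV
  have p0 : 0 ≤ (k + 1) * 4 ^ k / N ^ 4 := by positivity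
  have p1 : 0 ≤ 2 * 4 ^ k / N ^ 3 := by positivity
  have bX' := bX.trans (mul_le_mul_of_nonneg_right
    (pow_le_pow_left₀ (Finset.sum_nonneg fun i _ => by positivity) sX 2) hA0)
  have bY' := bY.trans (mul_le_mul_of_nonneg_right
    (pow_le_pow_left₀ (Finset.sum_nonneg fun i _ => by positivity) sY 2) hA0)
  rw [energyNorm, L2norm, integral_congr_ae hderiv]
  refine Real.sqrt_le_iff.2 ⟨by positivity, ?_⟩
  rw [mul_pow, Real.sq_sqrt hA0]
  have hsplit : ∫ p in Omega2, (VX p ^ 2 + VY p ^ 2 + V p ^ 2)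
      = (∫ p in Omega2, VX p ^ 2) + (∫ p in Omega2, VY p ^ 2) + ∫ p in Omega2, V p ^ 2 := by
    rw [integral_add (iX.fun_add iY) iV, integral_add iX iY]
  rw [hsplit]
  calc _ ≤ (2 * 4 ^ k / N ^ 3) ^ 2 * A + (2 * 4 ^ k / N ^ 3) ^ 2 * A
        + ((k + 1) * 4 ^ k / N ^ 4) ^ 2 * A := add_le_add (add_le_add bX' bY') bV
    _ ≤ ((k + 1) * 4 ^ k / N ^ 4 + 4 * 4 ^ k / N ^ 3) ^ 2 * A := by
        rw [← add_mul, ← add_mul]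
        refine mul_le_mul_of_nonneg_right ?_ hA0
        rw [show 4 * 4 ^ k / N ^ 3 = 2 * (2 * 4 ^ k / N ^ 3) by ring]
        nlinarith [mul_nonneg p0 p1]

/-- Energy-norm bound between successive multiscale interpolants:
`|||I^{(k)}_{N,N}u − I^{(k−1)}_{N,N}u||| ≤ C (k·4^{k+1}·N⁻⁴ + 4^{k+1}·N⁻³) ‖∂⁴u/∂x²∂y²‖_{0,Ω}`
for `N = 2^m` and `1 ≤ k ≤ m`. -/
theorem multiscale_successive_levels_energy_bound :
    ∃ C : ℝ, 0 < C ∧ ∀ (m k : ℕ), 1 ≤ m → 1 ≤ k → k ≤ m →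
      ∀ u : ℝ × ℝ → ℝ, C4Near u → VanishOnBoundary u →
        energyNorm (fun p => msInterp (2 ^ m) k u p - msInterp (2 ^ m) (k - 1) u p) ≤
          C * ((k : ℝ) * 4 ^ (k + 1) * (((2 : ℝ) ^ m) ^ 4)⁻¹ +
              4 ^ (k + 1) * (((2 : ℝ) ^ m) ^ 3)⁻¹) * L2norm (uxxyy u) := by
  refine ⟨1, one_pos, fun m k _ hk hkm u hu _ => ?_⟩
  obtain ⟨k, rfl⟩ : ∃ j, k = j + 1 := ⟨k - 1, by omega⟩
  rw [Nat.add_sub_cancel]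
  refine (energyNorm_msInterp_sub_le hkm hu).trans ?_
  refine mul_le_mul_of_nonneg_right ?_ (Real.sqrt_nonneg _)
  rw [one_mul, div_eq_mul_inv, div_eq_mul_inv]
  push_cast
  gcongr
  · norm_num
  · omega
  · rw [← pow_succ']
    gcongr
    · norm_num
    · omega
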